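/- Let (H,α) be a monoidal Hom-Hopf algebra. The map ρ:H→H⊗(H^op⊗H), h↦α(h_21)⊗(α^{-1}(S(h_1))⊗h_22) makes (H,α) a right Hom-comodule algebra over the monoidal Hom-bialgebra (H^op⊗H, α⊗α); in particular ρ is multiplicative: ρ(gh)=ρ(g)ρ(h) where the product on H^op⊗H is (h⊗k)(h'⊗k')=h'h⊗kk'. -/

import Mathlib

open TensorProduct

namespace HomPaper

variable {k : Type*} [CommRing k]
variable {A C V : Type*}
variable [AddCommGroup A] [Module k A] [AddCommGroup C] [Module k C]
variable [AddCommGroup V] [Module k V]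

/-- Monoidal Hom-algebra axioms. -/
def IsHomAlgebra (α : A ≃ₗ[k] A) (mul : A →ₗ[k] A →ₗ[k] A) (one : A) : Prop :=
  (∀ a b c, mul (α a) (mul b c) = mul (mul a b) (α c)) ∧
  (∀ a, mul a one = α a) ∧ (∀ a, mul one a = α a) ∧
  (∀ a b, α (mul a b) = mul (α a) (α b)) ∧ α one = one

/-- Monoidal Hom-coalgebra axioms. -/
def IsHomCoalgebra (γ : C ≃ₗ[k] C) (Δ : C →ₗ[k] C ⊗[k] C) (ε : C →ₗ[k] k) : Prop :=
  (∀ c, TensorProduct.map γ.symm.toLinearMap Δ (Δ c)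
      = TensorProduct.assoc k C C C (TensorProduct.map Δ γ.symm.toLinearMap (Δ c))) ∧
  (∀ c, TensorProduct.lid k C (TensorProduct.map ε LinearMap.id (Δ c)) = γ.symm c) ∧
  (∀ c, TensorProduct.rid k C (TensorProduct.map LinearMap.id ε (Δ c)) = γ.symm c) ∧
  (∀ c, Δ (γ c) = TensorProduct.map γ.toLinearMap γ.toLinearMap (Δ c)) ∧
  (∀ c, ε (γ c) = ε c)

/-- Hom-entwining structure axioms for ψ : C ⊗ A → A ⊗ C, ψ(c⊗a) = a_κ ⊗ c^κ. -/
def IsHomEntwining (α : A ≃ₗ[k] A) (γ : C ≃ₗ[k] C) (mul : A →ₗ[k] A →ₗ[k] A) (one : A)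
    (Δ : C →ₗ[k] C ⊗[k] C) (ε : C →ₗ[k] k) (ψ : C ⊗[k] A →ₗ[k] A ⊗[k] C) : Prop :=
  -- (aa')_κ ⊗ γ(c)^κ = a_κ a'_λ ⊗ γ(c^{κλ})
  (∀ c a a', ψ (γ c ⊗ₜ mul a a')
      = TensorProduct.map (TensorProduct.lift mul) γ.toLinearMap
          ((TensorProduct.assoc k A A C).symm
            (TensorProduct.map LinearMap.id ψ
              (TensorProduct.assoc k A C A (ψ (c ⊗ₜ a) ⊗ₜ a'))))) ∧
  -- α⁻¹(a_κ) ⊗ c^κ₁ ⊗ c^κ₂ = α⁻¹(a)_{κλ} ⊗ c₁^λ ⊗ c₂^κ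
  (∀ c a, TensorProduct.map α.symm.toLinearMap Δ (ψ (c ⊗ₜ a))
      = TensorProduct.assoc k A C C
          (TensorProduct.map ψ LinearMap.id
            ((TensorProduct.assoc k C A C).symm
              (TensorProduct.map LinearMap.id ψ
                (TensorProduct.assoc k C C A (Δ c ⊗ₜ α.symm a)))))) ∧
  -- 1_κ ⊗ c^κ = 1 ⊗ c
  (∀ c, ψ (c ⊗ₜ one) = one ⊗ₜ c) ∧
  -- a_κ ε(c^κ) = a ε(c)
  (∀ c a, TensorProduct.rid k A (TensorProduct.map LinearMap.id ε (ψ (c ⊗ₜ a))) = ε c • a) ∧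
  -- ψ is a morphism in the Hom-category
  (∀ c a, ψ (γ c ⊗ₜ α a) = TensorProduct.map α.toLinearMap γ.toLinearMap (ψ (c ⊗ₜ a)))

/-- The relations defining `V ⊗_A V` (on top of base relations `R₀` defining the coring
module as a quotient of `V`). -/
def corRel (R₀ : Submodule k V) (χ : V ≃ₗ[k] V)
    (lact : A →ₗ[k] V →ₗ[k] V) (ract : V →ₗ[k] A →ₗ[k] V) : Submodule k (V ⊗[k] V) :=
  Submodule.span k
    ({x | ∃ v a w, x = ract v a ⊗ₜ w - χ v ⊗ₜ lact a (χ.symm w)} ∪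
     {x | ∃ r w, r ∈ R₀ ∧ (x = r ⊗ₜ w ∨ x = w ⊗ₜ r)})

/-- Induced left A-action on `V ⊗_A V` (on representatives). -/
noncomputable def lact2 (α : A ≃ₗ[k] A) (χ : V ≃ₗ[k] V) (lact : A →ₗ[k] V →ₗ[k] V) (a : A) :
    V ⊗[k] V →ₗ[k] V ⊗[k] V :=
  TensorProduct.map (lact (α.symm a)) χ.toLinearMap

/-- Induced right A-action on `V ⊗_A V` (on representatives). -/
noncomputable def ract2 (α : A ≃ₗ[k] A) (χ : V ≃ₗ[k] V) (ract : V →ₗ[k] A →ₗ[k] V) (a : A) :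
    V ⊗[k] V →ₗ[k] V ⊗[k] V :=
  TensorProduct.map χ.toLinearMap (ract.flip (α.symm a))

/-- The relations defining `V ⊗_A (V ⊗_A V)`. -/
def corRel3 (R₀ : Submodule k V) (α : A ≃ₗ[k] A) (χ : V ≃ₗ[k] V)
    (lact : A →ₗ[k] V →ₗ[k] V) (ract : V →ₗ[k] A →ₗ[k] V) :
    Submodule k (V ⊗[k] (V ⊗[k] V)) :=
  Submodule.span k
    ({x | ∃ v a w, x = ract v a ⊗ₜ w - χ v ⊗ₜ lact2 α χ lact a w} ∪
     {x | ∃ v w, w ∈ corRel R₀ χ lact ract ∧ x = v ⊗ₜ w} ∪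
     {x | ∃ r w, r ∈ R₀ ∧ x = r ⊗ₜ w})

/-- `(V,χ)` (modulo the relations `R₀`) together with the A-bimodule structure
`lact`, `ract`, comultiplication representative `Δ` and counit `ε` is an
`(A,α)`-Hom-coring: all axioms are stated on representatives, under the quotient
projections by `R₀` resp. the tensor-relation submodules. -/
def IsHomCoring (α : A ≃ₗ[k] A) (mul : A →ₗ[k] A →ₗ[k] A) (one : A)
    (χ : V ≃ₗ[k] V) (lact : A →ₗ[k] V →ₗ[k] V) (ract : V →ₗ[k] A →ₗ[k] V)
    (R₀ : Submodule k V) (Δ : V →ₗ[k] V ⊗[k] V) (ε : V →ₗ[k] A) : Prop :=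
  -- (V,χ) is an (A,α)-Hom-bimodule
  (∀ a b v, Submodule.Quotient.mk (p := R₀) (lact (mul a b) (χ v))
      = Submodule.Quotient.mk (p := R₀) (lact (α a) (lact b v))) ∧
  (∀ v, Submodule.Quotient.mk (p := R₀) (lact one v) = Submodule.Quotient.mk (p := R₀) (χ v)) ∧
  (∀ v a b, Submodule.Quotient.mk (p := R₀) (ract (χ v) (mul a b))
      = Submodule.Quotient.mk (p := R₀) (ract (ract v a) (α b))) ∧
  (∀ v, Submodule.Quotient.mk (p := R₀) (ract v one) = Submodule.Quotient.mk (p := R₀) (χ v)) ∧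
  (∀ a v b, Submodule.Quotient.mk (p := R₀) (ract (lact a v) (α b))
      = Submodule.Quotient.mk (p := R₀) (lact (α a) (ract v b))) ∧
  (∀ a v, Submodule.Quotient.mk (p := R₀) (χ (lact a v))
      = Submodule.Quotient.mk (p := R₀) (lact (α a) (χ v))) ∧
  (∀ v a, Submodule.Quotient.mk (p := R₀) (χ (ract v a))
      = Submodule.Quotient.mk (p := R₀) (ract (χ v) (α a))) ∧
  (∀ r ∈ R₀, χ r ∈ R₀) ∧
  -- Δ and ε are well defined on the quotient by R₀
  (∀ r ∈ R₀, Submodule.Quotient.mk (p := corRel R₀ χ lact ract) (Δ r) = 0) ∧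
  (∀ r ∈ R₀, ε r = 0) ∧
  -- A-bilinearity of Δ
  (∀ a v, Submodule.Quotient.mk (p := corRel R₀ χ lact ract) (Δ (lact a v))
      = Submodule.Quotient.mk (p := corRel R₀ χ lact ract) (lact2 α χ lact a (Δ v))) ∧
  (∀ v a, Submodule.Quotient.mk (p := corRel R₀ χ lact ract) (Δ (ract v a))
      = Submodule.Quotient.mk (p := corRel R₀ χ lact ract) (ract2 α χ ract a (Δ v))) ∧
  -- A-bilinearity of ε
  (∀ a v, ε (lact a v) = mul a (ε v)) ∧
  (∀ v a, ε (ract v a) = mul (ε v) a) ∧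
  -- Hom-coassociativity: χ⁻¹(c₁) ⊗ Δ(c₂) = c₁₁ ⊗ (c₁₂ ⊗ χ⁻¹(c₂))
  (∀ v, Submodule.Quotient.mk (p := corRel3 R₀ α χ lact ract)
        (TensorProduct.map χ.symm.toLinearMap Δ (Δ v))
      = Submodule.Quotient.mk (p := corRel3 R₀ α χ lact ract)
        (TensorProduct.assoc k V V V (TensorProduct.map Δ χ.symm.toLinearMap (Δ v)))) ∧
  -- counity: ε(c₁)c₂ = c = c₁ε(c₂)
  (∀ v, Submodule.Quotient.mk (p := R₀) (TensorProduct.lift (lact ∘ₗ ε) (Δ v))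
      = Submodule.Quotient.mk (p := R₀) v) ∧
  (∀ v, Submodule.Quotient.mk (p := R₀) (TensorProduct.lift (ract.compl₂ ε) (Δ v))
      = Submodule.Quotient.mk (p := R₀) v) ∧
  -- compatibility with the twisting maps
  (∀ v, Submodule.Quotient.mk (p := corRel R₀ χ lact ract) (Δ (χ v))
      = Submodule.Quotient.mk (p := corRel R₀ χ lact ract)
        (TensorProduct.map χ.toLinearMap χ.toLinearMap (Δ v))) ∧
  (∀ v, ε (χ v) = α (ε v))

end HomPaper

namespace HomPaper

variable {k A B C M : Type*} [CommRing k]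
variable [AddCommGroup A] [Module k A] [AddCommGroup B] [Module k B]
variable [AddCommGroup C] [Module k C] [AddCommGroup M] [Module k M]

/-- Monoidal Hom-bialgebra axioms. -/
def IsHomBialgebra (β : B ≃ₗ[k] B) (mul : B →ₗ[k] B →ₗ[k] B) (one : B)
    (Δ : B →ₗ[k] B ⊗[k] B) (ε : B →ₗ[k] k) : Prop :=
  IsHomAlgebra β mul one ∧ IsHomCoalgebra β Δ ε ∧
  (∀ b b', Δ (mul b b')
      = (TensorProduct.map (TensorProduct.lift mul) (TensorProduct.lift mul))
          (TensorProduct.tensorTensorTensorComm k B B B B (Δ b ⊗ₜ Δ b'))) ∧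
  Δ one = one ⊗ₜ one ∧
  (∀ b b', ε (mul b b') = ε b * ε b') ∧ ε one = 1

/-- `(A,α)` is a right `(B,β)`-Hom-comodule algebra with coaction `ρ`. -/
def IsHomComoduleAlgebra (β : B ≃ₗ[k] B) (mulB : B →ₗ[k] B →ₗ[k] B)
    (ΔB : B →ₗ[k] B ⊗[k] B) (εB : B →ₗ[k] k)
    (α : A ≃ₗ[k] A) (mulA : A →ₗ[k] A →ₗ[k] A) (oneA : A) (oneB : B)
    (ρ : A →ₗ[k] A ⊗[k] B) : Prop :=
  -- Hom-comodule axioms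
  (∀ a, TensorProduct.map α.symm.toLinearMap ΔB (ρ a)
      = TensorProduct.assoc k A B B (TensorProduct.map ρ β.symm.toLinearMap (ρ a))) ∧
  (∀ a, TensorProduct.rid k A (TensorProduct.map LinearMap.id εB (ρ a)) = α.symm a) ∧
  (∀ a, ρ (α a) = TensorProduct.map α.toLinearMap β.toLinearMap (ρ a)) ∧
  -- ρ is a morphism of Hom-algebras
  (∀ a a', ρ (mulA a a')
      = (TensorProduct.map (TensorProduct.lift mulA) (TensorProduct.lift mulB))
          (TensorProduct.tensorTensorTensorComm k A B A B (ρ a ⊗ₜ ρ a'))) ∧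
  ρ oneA = oneA ⊗ₜ oneB

/-- `(C,γ)` is a right `(B,β)`-Hom-module coalgebra with action `act`. -/
def IsHomModuleCoalgebra (β : B ≃ₗ[k] B) (mulB : B →ₗ[k] B →ₗ[k] B) (oneB : B)
    (ΔB : B →ₗ[k] B ⊗[k] B) (εB : B →ₗ[k] k)
    (γ : C ≃ₗ[k] C) (ΔC : C →ₗ[k] C ⊗[k] C) (εC : C →ₗ[k] k)
    (act : C →ₗ[k] B →ₗ[k] C) : Prop :=
  -- Hom-module axioms
  (∀ c b b', act (γ c) (mulB b b') = act (act c b) (β b')) ∧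
  (∀ c, act c oneB = γ c) ∧
  (∀ c b, γ (act c b) = act (γ c) (β b)) ∧
  -- the action is a morphism of Hom-coalgebras
  (∀ c b, ΔC (act c b)
      = (TensorProduct.map (TensorProduct.lift act) (TensorProduct.lift act))
          (TensorProduct.tensorTensorTensorComm k C C B B (ΔC c ⊗ₜ ΔB b))) ∧
  (∀ c b, εC (act c b) = εC c * εB b)

/-- The entwining map of a Hom-Doi-Koppinen datum:
`ψ(c⊗a) = α(a₍₀₎) ⊗ γ⁻¹(c)·a₍₁₎`. -/
noncomputable def dkEntwining (α : A ≃ₗ[k] A) (γ : C ≃ₗ[k] C)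
    (ρA : A →ₗ[k] A ⊗[k] B) (actC : C →ₗ[k] B →ₗ[k] C) :
    C ⊗[k] A →ₗ[k] A ⊗[k] C :=
  (TensorProduct.map α.toLinearMap
      ((TensorProduct.lift actC) ∘ₗ (TensorProduct.map γ.symm.toLinearMap LinearMap.id))) ∘ₗ
    (TensorProduct.leftComm k C A B).toLinearMap ∘ₗ
      (TensorProduct.map LinearMap.id ρA)
end HomPaper
namespace HomPaper

/-- Monoidal Hom-Hopf algebra axioms: a monoidal Hom-bialgebra with an antipode. -/
def IsHomHopfAlgebra {k H : Type*} [CommRing k] [AddCommGroup H] [Module k H]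
    (α : H ≃ₗ[k] H) (mul : H →ₗ[k] H →ₗ[k] H) (one : H)
    (Δ : H →ₗ[k] H ⊗[k] H) (ε : H →ₗ[k] k) (S : H →ₗ[k] H) : Prop :=
  IsHomBialgebra α mul one Δ ε ∧
  (∀ h, S (α h) = α (S h)) ∧
  (∀ h, TensorProduct.lift mul (TensorProduct.map S LinearMap.id (Δ h)) = ε h • one) ∧
  (∀ h, TensorProduct.lift mul (TensorProduct.map LinearMap.id S (Δ h)) = ε h • one)

section OpTensor

variable {k H : Type*} [CommRing k] [AddCommGroup H] [Module k H]

/-- The multiplication of `H^op ⊗ H`: `(h⊗k)(h'⊗k') = h'h ⊗ kk'`. -/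
noncomputable def opTensorMul (mul : H →ₗ[k] H →ₗ[k] H) :
    (H ⊗[k] H) →ₗ[k] (H ⊗[k] H) →ₗ[k] H ⊗[k] H :=
  TensorProduct.curry
    ((TensorProduct.map (TensorProduct.lift mul.flip) (TensorProduct.lift mul)) ∘ₗ
      (TensorProduct.tensorTensorTensorComm k H H H H).toLinearMap)

/-- The comultiplication of `H^op ⊗ H`: `(h⊗k) ↦ (h₁⊗k₁) ⊗ (h₂⊗k₂)`. -/
noncomputable def opTensorComul (Δ : H →ₗ[k] H ⊗[k] H) :
    (H ⊗[k] H) →ₗ[k] (H ⊗[k] H) ⊗[k] (H ⊗[k] H) :=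
  (TensorProduct.tensorTensorTensorComm k H H H H).toLinearMap ∘ₗ
    TensorProduct.map Δ Δ

/-- The counit of `H^op ⊗ H`: `(h⊗k) ↦ ε(h)ε(k)`. -/
noncomputable def opTensorCounit (ε : H →ₗ[k] k) : (H ⊗[k] H) →ₗ[k] k :=
  (TensorProduct.lid k k).toLinearMap ∘ₗ TensorProduct.map ε ε

end OpTensor

section HopfAlgebra

open TensorProduct Coalgebra HopfAlgebra LinearMap
variable {k H : Type*} [CommRing k]

section Coalgebra

variable [AddCommGroup H] [Module k H] [Coalgebra k H]

theorem assoc_map_comul_comul {V : Type*} [AddCommGroup V] [Module k V] (f : H →ₗ[k] V) (h : H) :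
    TensorProduct.assoc k H H V (TensorProduct.map comul f (comul h)) =
      lTensor H (lTensor H f ∘ₗ comul) (comul h) := by
  have nat (z : (H ⊗[k] H) ⊗[k] H) : TensorProduct.assoc k H H V (lTensor (H ⊗[k] H) f z) =
      lTensor H (lTensor H f) (TensorProduct.assoc k H H H z) := by
    have : (TensorProduct.assoc k H H V).toLinearMap ∘ₗ lTensor (H ⊗[k] H) f =
      lTensor H (lTensor H f) ∘ₗ (TensorProduct.assoc k H H H).toLinearMap := by
      ext; rfl
    exact LinearMap.congr_fun this z
  rw [lTensor_comp, comp_apply, ← coassoc_apply, ← nat, ← comp_apply (lTensor _ f),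
    lTensor_comp_rTensor]

theorem assoc_rTensor_comul₃ (h : H) :
    lTensor H (TensorProduct.assoc k H H H).toLinearMap
      (TensorProduct.assoc k H (H ⊗[k] H) H (rTensor H (lTensor H comul ∘ₗ comul) (comul h))) =
      lTensor H (lTensor H comul ∘ₗ comul) (comul h) := by
  have nat (z : (H ⊗[k] H) ⊗[k] H) : TensorProduct.assoc k H (H ⊗[k] H) H
      (rTensor H (lTensor H comul) z) =
      lTensor H (rTensor H comul) (TensorProduct.assoc k H H H z) := by
    have : (TensorProduct.assoc k H (H ⊗[k] H) H).toLinearMap ∘ₗ rTensor H (lTensor H comul) =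
      lTensor H (rTensor H comul) ∘ₗ (TensorProduct.assoc k H H H).toLinearMap := by
      ext; rfl
    exact LinearMap.congr_fun this z
  rw [rTensor_comp, comp_apply, nat, coassoc_apply]
  rw [← lTensor_comp_apply, ← lTensor_comp_apply, comp_assoc, coassoc]

end Coalgebra

variable [Ring H] [HopfAlgebra k H]

theorem comul_antipode (h : H) :
    comul (R := k) (antipode k h) =
      TensorProduct.map (antipode k) (antipode k) (TensorProduct.comm k H H (comul h)) := by
  let F : H →ₗ[k] H ⊗[k] H := TensorProduct.map (antipode k) (antipode k) ∘ₗ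
    (TensorProduct.comm k H H).toLinearMap ∘ₗ comul
  let Q : H ⊗[k] ((H ⊗[k] H) ⊗[k] H) →ₗ[k] H ⊗[k] H :=
    TensorProduct.map (mul' k H ∘ₗ rTensor H (antipode k))
      (mul' k H ∘ₗ rTensor H (antipode k)) ∘ₗ (TensorProduct.leftComm k H (H ⊗[k] H) H).toLinearMap
  have hQ (z : H ⊗[k] H) : mul' k (H ⊗[k] H) (TensorProduct.map F comul z) =
      Q (lTensor H (TensorProduct.assoc k H H H).symm.toLinearMap
        (TensorProduct.assoc k H H (H ⊗[k] H) (TensorProduct.map comul comul z))) := by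
    induction z with
    | zero => simp
    | add x y hx hy => simp only [map_add, hx, hy]
    | tmul a b =>
      simp only [TensorProduct.map_tmul, F, comp_apply, LinearEquiv.coe_coe]
      induction comul (R := k) a with
      | zero => simp
      | add x y hx hy => simp only [map_add, add_tmul, hx, hy]
      | tmul a₁ a₂ =>
        induction comul (R := k) b with
        | zero => simp
        | add x y hx hy => simp only [map_add, tmul_add, hx, hy]
        | tmul b₁ b₂ => simp [Q]
  have hQ' (a b : H) : Q (a ⊗ₜ rTensor H comul (comul b)) = 1 ⊗ₜ (antipode k a * b) := by
    have key (z : H ⊗[k] H) : Q (a ⊗ₜ rTensor H comul z) =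
        1 ⊗ₜ (antipode k a * TensorProduct.lid k H (rTensor H counit z)) := by
      induction z with
      | zero => simp
      | add x y hx hy => simp only [map_add, tmul_add, mul_add, hx, hy]
      | tmul x y =>
        simp [Q, Algebra.algebraMap_eq_smul_one, smul_tmul]
    simp [key]
  have hF : (WithConv.toConv F) * WithConv.toConv (comul (R := k) (A := H)) = 1 := by
    ext c
    simp only [convMul_apply, convOne_apply]
    rw [hQ, assoc_map_comul_comul, ← comp_apply (lTensor H _), ← lTensor_comp]
    have e : (TensorProduct.assoc k H H H).symm.toLinearMap ∘ₗ lTensor H comul ∘ₗ comul =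
      rTensor H comul ∘ₗ comul (R := k) := coassoc_symm
    rw [e]
    have key (z : H ⊗[k] H) : Q (lTensor H (rTensor H comul ∘ₗ comul) z) =
        1 ⊗ₜ mul' k H (rTensor H (antipode k) z) := by
      induction z with
      | zero => simp
      | add x y hx hy => simp only [map_add, tmul_add, hx, hy]
      | tmul x y => simp [hQ']
    rw [key]
    simp [Algebra.algebraMap_eq_smul_one, Algebra.TensorProduct.one_def]
  have := left_inv_eq_right_inv hF LinearMap.comul_right_inv
  exact (LinearMap.congr_fun (WithConv.toConv_injective this) h).symm

variable (k H) in
/-- The coaction `h ↦ h₂ ⊗ (S(h₁) ⊗ h₃)` of `H^op ⊗ H` on a Hopf algebra `H`. -/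
noncomputable def hopfCoact : H →ₗ[k] H ⊗[k] (H ⊗[k] H) :=
  (TensorProduct.leftComm k H H H).toLinearMap ∘ₗ TensorProduct.map (antipode k) comul ∘ₗ comul

variable (k H) in
/-- The map `a ⊗ b ⊗ c ⊗ d ⊗ e ↦ c ⊗ ((S(b) ⊗ d) ⊗ (S(a) ⊗ e))`. -/
noncomputable def coactShuffle :
    H ⊗[k] (H ⊗[k] (H ⊗[k] (H ⊗[k] H))) →ₗ[k] H ⊗[k] ((H ⊗[k] H) ⊗[k] (H ⊗[k] H)) :=
  lTensor H (TensorProduct.map (rTensor H (antipode k)) (rTensor H (antipode k)) ∘ₗ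
      (TensorProduct.leftComm k H (H ⊗[k] H) H).toLinearMap ∘ₗ
      lTensor H (TensorProduct.assoc k H H H).symm.toLinearMap) ∘ₗ
    (TensorProduct.leftComm k H H (H ⊗[k] (H ⊗[k] H))).toLinearMap ∘ₗ
      lTensor H (TensorProduct.leftComm k H H (H ⊗[k] H)).toLinearMap

@[simp]
theorem coactShuffle_tmul (a b c d e : H) :
    coactShuffle k H (a ⊗ₜ (b ⊗ₜ (c ⊗ₜ (d ⊗ₜ e)))) =
      c ⊗ₜ ((antipode k b ⊗ₜ d) ⊗ₜ (antipode k a ⊗ₜ e)) := rfl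

theorem lTensor_comul_hopfCoact (h : H) :
    lTensor H (opTensorComul comul) (hopfCoact k H h) =
      coactShuffle k H (lTensor H (lTensor H (lTensor H comul ∘ₗ comul) ∘ₗ comul) (comul h)) := by
  rw [← assoc_map_comul_comul]
  simp only [hopfCoact, comp_apply]
  induction comul (R := k) h with
  | zero => simp
  | add x y hx hy => simp only [map_add, hx, hy]
  | tmul a b =>
    simp only [TensorProduct.map_tmul, comp_apply, LinearEquiv.coe_coe]
    induction comul (R := k) b with
    | zero => simp
    | add x y hx hy => simp only [map_add, tmul_add, hx, hy]
    | tmul b₁ b₂ =>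
      simp only [TensorProduct.leftComm_tmul, lTensor_tmul, opTensorComul, comp_apply,
        TensorProduct.map_tmul, LinearEquiv.coe_coe, comul_antipode]
      induction comul (R := k) a with
      | zero => simp
      | add x y hx hy => simp only [map_add, tmul_add, add_tmul, hx, hy]
      | tmul a₁ a₂ =>
        induction comul (R := k) b₂ with
        | zero => simp
        | add x y hx hy => simp only [map_add, tmul_add, hx, hy]
        | tmul c d => simp

theorem assoc_rTensor_hopfCoact (h : H) :
    TensorProduct.assoc k H (H ⊗[k] H) (H ⊗[k] H)
        (rTensor (H ⊗[k] H) (hopfCoact k H) (hopfCoact k H h)) =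
      coactShuffle k H (lTensor H (lTensor H (lTensor H comul ∘ₗ comul) ∘ₗ comul) (comul h)) := by
  have key : lTensor H (lTensor H comul ∘ₗ comul) ∘ₗ comul (R := k) (A := H) =
    lTensor H (TensorProduct.assoc k H H H).toLinearMap ∘ₗ
      (TensorProduct.assoc k H (H ⊗[k] H) H).toLinearMap ∘ₗ
        rTensor H (lTensor H comul ∘ₗ comul) ∘ₗ comul :=
    LinearMap.ext fun x ↦ (assoc_rTensor_comul₃ x).symm
  rw [key]
  conv_lhs => rw [hopfCoact]; simp only [comp_apply]
  induction comul (R := k) h with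
  | zero => simp
  | add x y hx hy => simp only [map_add, hx, hy]
  | tmul a b =>
    simp only [TensorProduct.map_tmul, lTensor_tmul, comp_apply, LinearEquiv.coe_coe]
    induction comul (R := k) b with
    | zero => simp
    | add x y hx hy => simp only [map_add, tmul_add, hx, hy]
    | tmul b₁ b₂ =>
      simp only [TensorProduct.leftComm_tmul, rTensor_tmul, comp_apply]
      induction comul (R := k) b₁ with
      | zero => simp
      | add x y hx hy => simp only [map_add, tmul_add, add_tmul, hx, hy]
      | tmul x y =>
        simp only [TensorProduct.map_tmul, lTensor_tmul, LinearEquiv.coe_coe]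
        induction comul (R := k) y with
        | zero => simp
        | add x y hx hy => simp only [map_add, tmul_add, add_tmul, hx, hy]
        | tmul c d => simp

theorem hopfCoact_coassoc (h : H) :
    lTensor H (opTensorComul comul) (hopfCoact k H h) =
      TensorProduct.assoc k H (H ⊗[k] H) (H ⊗[k] H)
        (rTensor (H ⊗[k] H) (hopfCoact k H) (hopfCoact k H h)) := by
  rw [lTensor_comul_hopfCoact, assoc_rTensor_hopfCoact]

theorem lTensor_counit_hopfCoact (h : H) :
    TensorProduct.rid k H (lTensor H (opTensorCounit counit) (hopfCoact k H h)) = h := by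
  have hz (a : H) (z : H ⊗[k] H) : TensorProduct.rid k H (lTensor H (opTensorCounit counit)
        (TensorProduct.leftComm k H H H (antipode k a ⊗ₜ z))) =
      counit (R := k) a • TensorProduct.rid k H (lTensor H counit z) := by
    induction z with
    | zero => simp
    | add x y hx hy => simp only [map_add, tmul_add, smul_add, hx, hy]
    | tmul x y => simp [opTensorCounit, mul_smul]
  have hw (w : H ⊗[k] H) : TensorProduct.rid k H (lTensor H (opTensorCounit counit)
        (TensorProduct.leftComm k H H H (TensorProduct.map (antipode k) comul w))) =
      TensorProduct.lid k H (rTensor H counit w) := by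
    induction w with
    | zero => simp
    | add x y hx hy => simp only [map_add, hx, hy]
    | tmul x y => simp [hz]
  simp [hopfCoact, hw]

theorem hopfCoact_mul (g h : H) :
    hopfCoact k H (g * h) =
      TensorProduct.map (mul' k H) (TensorProduct.lift (opTensorMul (LinearMap.mul k H)))
        (TensorProduct.tensorTensorTensorComm k H (H ⊗[k] H) H (H ⊗[k] H)
          (hopfCoact k H g ⊗ₜ hopfCoact k H h)) := by
  simp only [hopfCoact, comp_apply, Bialgebra.comul_mul]
  induction comul (R := k) g with
  | zero => simp
  | add x y hx hy => simp only [map_add, add_mul, add_tmul, hx, hy]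
  | tmul a b =>
    induction comul (R := k) h with
    | zero => simp
    | add x y hx hy => simp only [map_add, mul_add, tmul_add, hx, hy]
    | tmul a' b' =>
      simp only [TensorProduct.map_tmul, Algebra.TensorProduct.tmul_mul_tmul, Bialgebra.comul_mul,
        antipode_mul_antidistrib]
      induction comul (R := k) b with
      | zero => simp
      | add x y hx hy => simp only [map_add, add_mul, tmul_add, add_tmul, hx, hy]
      | tmul b₁ b₂ =>
        induction comul (R := k) b' with
        | zero => simp
        | add x y hx hy => simp only [map_add, mul_add, tmul_add, hx, hy]
        | tmul c d => simp [opTensorMul]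

theorem hopfCoact_one : hopfCoact k H 1 = 1 ⊗ₜ (1 ⊗ₜ 1) := by
  simp [hopfCoact, Algebra.TensorProduct.one_def]

theorem hopfCoact_map (f : H →ₗ[k] H)
    (hf : ∀ h, comul (R := k) (f h) = TensorProduct.map f f (comul h))
    (hS : ∀ h, antipode k (f h) = f (antipode k h)) (h : H) :
    hopfCoact k H (f h) = TensorProduct.map f (TensorProduct.map f f) (hopfCoact k H h) := by
  simp only [hopfCoact, comp_apply, hf]
  induction comul (R := k) h with
  | zero => simp
  | add x y hx hy => simp only [map_add, hx, hy]
  | tmul a b =>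
    simp only [TensorProduct.map_tmul, hf, hS, LinearEquiv.coe_coe]
    induction comul (R := k) b with
    | zero => simp
    | add x y hx hy => simp only [map_add, tmul_add, hx, hy]
    | tmul c d => simp

/-- A Hopf algebra automorphism `α` twists the coaction `hopfCoact` into a Hom-comodule algebra
structure. -/
theorem isHomComoduleAlgebra_twist (α : H ≃ₗ[k] H)
    (hmul : ∀ a b, α (a * b) = α a * α b) (hone : α 1 = 1)
    (hΔ : ∀ h, comul (R := k) (α h) = TensorProduct.map α.toLinearMap α.toLinearMap (comul h))
    (hε : ∀ h, counit (R := k) (α h) = counit (R := k) h)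
    (hS : ∀ h, antipode k (α h) = α (antipode k h))
    (m : H →ₗ[k] H →ₗ[k] H) (hm : ∀ a b, m a b = α (a * b))
    (Δ : H →ₗ[k] H ⊗[k] H)
    (hΔ' : ∀ h, Δ h = TensorProduct.map α.symm.toLinearMap α.symm.toLinearMap (comul h)) :
    IsHomComoduleAlgebra (B := H ⊗[k] H)
      (TensorProduct.congr α α) (opTensorMul m)
      (opTensorComul Δ) (opTensorCounit counit)
      α m 1 (1 ⊗ₜ 1)
      ((TensorProduct.map α.toLinearMap (TensorProduct.map α.symm.toLinearMap LinearMap.id)) ∘ₗ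
        (TensorProduct.leftComm k H H H).toLinearMap ∘ₗ
          (TensorProduct.map (antipode k) Δ) ∘ₗ Δ) := by
  have hmul' (a b : H) : α.symm (a * b) = α.symm a * α.symm b := by
    rw [LinearEquiv.symm_apply_eq]; simp [hmul]
  have hone' : α.symm 1 = 1 := by rw [LinearEquiv.symm_apply_eq, hone]
  have hS' (h : H) : antipode k (α.symm h) = α.symm (antipode k h) := by
    rw [LinearEquiv.eq_symm_apply, ← hS, LinearEquiv.apply_symm_apply]
  have hε' (h : H) : counit (R := k) (α.symm h) = counit (R := k) h := by
    rw [← hε, LinearEquiv.apply_symm_apply]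
  have hc (h : H) : comul (R := k) (α.symm h) =
      TensorProduct.map α.symm.toLinearMap α.symm.toLinearMap (comul h) := by
    have e := congrArg (TensorProduct.map α.symm.toLinearMap α.symm.toLinearMap) (hΔ (α.symm h))
    rw [TensorProduct.map_map, LinearEquiv.symm_comp, TensorProduct.map_id] at e
    simpa using e.symm
  generalize hρ : (TensorProduct.map α.toLinearMap
    (TensorProduct.map α.symm.toLinearMap LinearMap.id)) ∘ₗ
      (TensorProduct.leftComm k H H H).toLinearMap ∘ₗ
        (TensorProduct.map (antipode k) Δ) ∘ₗ Δ = ρ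
  let β₂ : H →ₗ[k] H := α.symm.toLinearMap ∘ₗ α.symm.toLinearMap
  have hρ' (h : H) : ρ h = TensorProduct.map α.symm.toLinearMap (TensorProduct.map β₂ β₂)
      (hopfCoact k H h) := by
    subst hρ
    simp only [hopfCoact, comp_apply, hΔ']
    induction comul (R := k) h with
    | zero => simp
    | add x y hx hy => simp only [map_add, hx, hy]
    | tmul a b =>
      simp only [TensorProduct.map_tmul, hΔ', hc, hS', LinearEquiv.coe_coe]
      induction comul (R := k) b with
      | zero => simp
      | add x y hx hy => simp only [map_add, tmul_add, hx, hy]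
      | tmul c d => simp [β₂]
  have hcoact := hopfCoact_map (k := k) α.symm.toLinearMap hc hS'
  refine ⟨fun a ↦ ?_, fun a ↦ ?_, fun a ↦ ?_, fun a b ↦ ?_, ?_⟩
  · let β₃ : H →ₗ[k] H := α.symm.toLinearMap ∘ₗ β₂
    let T := TensorProduct.map β₂ (TensorProduct.map (TensorProduct.map β₃ β₃)
      (TensorProduct.map β₃ β₃))
    have hl (z : H ⊗[k] (H ⊗[k] H)) : TensorProduct.map α.symm.toLinearMap (opTensorComul Δ)
        (TensorProduct.map α.symm.toLinearMap (TensorProduct.map β₂ β₂) z) =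
          T (lTensor H (opTensorComul comul) z) := by
      have : TensorProduct.map α.symm.toLinearMap (opTensorComul Δ) ∘ₗ
        TensorProduct.map α.symm.toLinearMap (TensorProduct.map β₂ β₂) =
          T ∘ₗ lTensor H (opTensorComul comul) := by
        ext x y w
        simp only [opTensorComul, TensorProduct.AlgebraTensorModule.curry_apply,
          LinearMap.restrictScalars_self, TensorProduct.curry_apply, comp_apply,
          TensorProduct.map_tmul, lTensor_tmul, LinearEquiv.coe_coe, β₂, hΔ', hc]
        induction comul (R := k) y with
        | zero => simp
        | add x y hx hy => simp only [map_add, tmul_add, add_tmul, hx, hy]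
        | tmul y₁ y₂ =>
          induction comul (R := k) w with
          | zero => simp
          | add x y hx hy => simp only [map_add, tmul_add, hx, hy]
          | tmul w₁ w₂ => simp [T, β₂, β₃]
      exact LinearMap.congr_fun this z
    have hr (z : H ⊗[k] (H ⊗[k] H)) : TensorProduct.assoc k H (H ⊗[k] H) (H ⊗[k] H)
        (TensorProduct.map ρ (TensorProduct.congr α α).symm.toLinearMap
          (TensorProduct.map α.symm.toLinearMap (TensorProduct.map β₂ β₂) z)) =
        T (TensorProduct.assoc k H (H ⊗[k] H) (H ⊗[k] H)
          (rTensor (H ⊗[k] H) (hopfCoact k H) z)) := by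
      have : (TensorProduct.assoc k H (H ⊗[k] H) (H ⊗[k] H)).toLinearMap ∘ₗ
        TensorProduct.map ρ (TensorProduct.congr α α).symm.toLinearMap ∘ₗ
          TensorProduct.map α.symm.toLinearMap (TensorProduct.map β₂ β₂) =
        T ∘ₗ (TensorProduct.assoc k H (H ⊗[k] H) (H ⊗[k] H)).toLinearMap ∘ₗ
          rTensor (H ⊗[k] H) (hopfCoact k H) := by
        ext x y w
        simp only [TensorProduct.AlgebraTensorModule.curry_apply,
          LinearMap.restrictScalars_self, TensorProduct.curry_apply, comp_apply,
          TensorProduct.map_tmul, rTensor_tmul, LinearEquiv.coe_coe, hρ']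
        rw [← LinearEquiv.coe_coe α.symm, hcoact]
        induction hopfCoact k H x with
        | zero => simp
        | add x y hx hy => simp only [map_add, add_tmul, hx, hy]
        | tmul x u =>
          induction u with
          | zero => simp
          | add x y hx hy => simp only [map_add, tmul_add, add_tmul, hx, hy]
          | tmul u v => simp [T, β₂, β₃]
      exact LinearMap.congr_fun this z
    rw [hρ', hl, hr, hopfCoact_coassoc]
  · have hz (z : H ⊗[k] (H ⊗[k] H)) : TensorProduct.rid k H
        (TensorProduct.map LinearMap.id (opTensorCounit counit)
          (TensorProduct.map α.symm.toLinearMap (TensorProduct.map β₂ β₂) z)) =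
        α.symm (TensorProduct.rid k H (lTensor H (opTensorCounit counit) z)) := by
      induction z with
      | zero => simp
      | add x y hx hy => simp only [map_add, hx, hy]
      | tmul x u =>
        induction u with
        | zero => simp
        | add x y hx hy => simp only [map_add, tmul_add, hx, hy]
        | tmul u v => simp [opTensorCounit, β₂, hε']
    rw [hρ', hz, lTensor_counit_hopfCoact]
  · rw [hρ', hρ', ← LinearEquiv.coe_coe α, hopfCoact_map α.toLinearMap hΔ hS]
    induction hopfCoact k H a with
    | zero => simp
    | add x y hx hy => simp only [map_add, hx, hy]
    | tmul x u =>
      induction u with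
      | zero => simp
      | add x y hx hy => simp only [map_add, tmul_add, hx, hy]
      | tmul u v => simp [β₂]
  · rw [hρ', hρ', hρ', hm, ← LinearEquiv.coe_coe α, hopfCoact_map α.toLinearMap hΔ hS,
      hopfCoact_mul]
    induction hopfCoact k H a with
    | zero => simp
    | add x y hx hy => simp only [map_add, add_tmul, hx, hy]
    | tmul x u =>
      induction hopfCoact k H b with
      | zero => simp
      | add x y hx hy => simp only [map_add, tmul_add, hx, hy]
      | tmul y v =>
        induction u with
        | zero => simp
        | add x y hx hy => simp only [map_add, tmul_add, add_tmul, hx, hy]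
        | tmul u u' =>
          induction v with
          | zero => simp
          | add x y hx hy => simp only [map_add, tmul_add, hx, hy]
          | tmul v v' => simp [opTensorMul, β₂, hm, hmul, hmul']
  · rw [hρ', hopfCoact_one]
    simp [β₂, hone']

end HopfAlgebra
/-- Let `(H,α)` be a monoidal Hom-Hopf algebra. The map
`ρ : H → H ⊗ (H^op⊗H)`, `h ↦ α(h₂₁) ⊗ (α⁻¹(S(h₁)) ⊗ h₂₂)` makes `(H,α)` a right
Hom-comodule algebra over the monoidal Hom-bialgebra `(H^op⊗H, α⊗α)`; in particular ρ
is multiplicative: `ρ(gh) = ρ(g)ρ(h)`, where `(h⊗k)(h'⊗k') = h'h ⊗ kk'`. -/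
theorem hopf_comodule_algebra_over_opTensor
    {k H : Type*} [CommRing k] [AddCommGroup H] [Module k H]
    (α : H ≃ₗ[k] H) (mul : H →ₗ[k] H →ₗ[k] H) (one : H)
    (Δ : H →ₗ[k] H ⊗[k] H) (ε : H →ₗ[k] k) (S : H →ₗ[k] H)
    (hH : IsHomHopfAlgebra α mul one Δ ε S) :
    IsHomComoduleAlgebra (B := H ⊗[k] H)
      (TensorProduct.congr α α) (opTensorMul mul)
      (opTensorComul Δ) (opTensorCounit ε)
      α mul one (one ⊗ₜ one)
      ((TensorProduct.map α.toLinearMap (TensorProduct.map α.symm.toLinearMap LinearMap.id)) ∘ₗ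
        (TensorProduct.leftComm k H H H).toLinearMap ∘ₗ
          (TensorProduct.map S Δ) ∘ₗ Δ) := by
  obtain ⟨⟨⟨hassoc, hmul1, h1mul, hαmul, hα1⟩, ⟨hcoassoc, hcl, hcr, hΔα, hεα⟩,
    hΔmul, hΔ1, hεmul, hε1⟩, hSα, hSl, hSr⟩ := hH
  have hsymm_mul (a b : H) : α.symm (mul a b) = mul (α.symm a) (α.symm b) := by
    rw [LinearEquiv.symm_apply_eq]; simp [hαmul]
  let _ : Ring H :=
    { ‹AddCommGroup H› with
      mul := fun a b ↦ α.symm (mul a b)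
      one := one
      mul_assoc := fun a b c ↦ by
        change α.symm (mul (α.symm (mul a b)) c) = α.symm (mul a (α.symm (mul b c)))
        have := hassoc (α.symm (α.symm a)) (α.symm (α.symm b)) (α.symm (α.symm c))
        simpa [hsymm_mul] using this.symm
      one_mul := fun a ↦ by
        change α.symm (mul one a) = a
        simp [h1mul]
      mul_one := fun a ↦ by
        change α.symm (mul a one) = a
        simp [hmul1]
      left_distrib := fun a b c ↦ by
        change α.symm (mul a (b + c)) = α.symm (mul a b) + α.symm (mul a c)
        simp
      right_distrib := fun a b c ↦ by
        change α.symm (mul (a + b) c) = α.symm (mul a c) + α.symm (mul b c)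
        simp
      zero_mul := fun a ↦ by
        change α.symm (mul 0 a) = 0
        simp
      mul_zero := fun a ↦ by
        change α.symm (mul a 0) = 0
        simp }
  have mul_def (a b : H) : a * b = α.symm (mul a b) := rfl
  have one_def : (1 : H) = one := rfl
  let _ : Algebra k H := Algebra.ofModule
    (fun r a b ↦ by simp [mul_def]) (fun r a b ↦ by simp [mul_def])
  let _ : Coalgebra k H :=
    { comul := TensorProduct.map α.toLinearMap α.toLinearMap ∘ₗ Δ
      counit := ε
      coassoc := by
        let α₂ : H →ₗ[k] H := α.toLinearMap ∘ₗ α.toLinearMap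
        have hl (z : H ⊗[k] H) : TensorProduct.assoc k H H H (LinearMap.rTensor H
            (TensorProduct.map α.toLinearMap α.toLinearMap ∘ₗ Δ)
              (TensorProduct.map α.toLinearMap α.toLinearMap z)) =
            TensorProduct.map α₂ (TensorProduct.map α₂ α₂)
              (TensorProduct.assoc k H H H (TensorProduct.map Δ α.symm.toLinearMap z)) := by
          induction z with
          | zero => simp
          | add x y hx hy => simp only [map_add, hx, hy]
          | tmul x y =>
            simp only [TensorProduct.map_tmul, LinearMap.rTensor_tmul, LinearMap.comp_apply,
              LinearEquiv.coe_coe, hΔα]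
            induction Δ x with
            | zero => simp
            | add x y hx hy => simp only [map_add, add_tmul, hx, hy]
            | tmul a b => simp [α₂]
        have hr (z : H ⊗[k] H) : LinearMap.lTensor H
            (TensorProduct.map α.toLinearMap α.toLinearMap ∘ₗ Δ)
              (TensorProduct.map α.toLinearMap α.toLinearMap z) =
            TensorProduct.map α₂ (TensorProduct.map α₂ α₂)
              (TensorProduct.map α.symm.toLinearMap Δ z) := by
          induction z with
          | zero => simp
          | add x y hx hy => simp only [map_add, hx, hy]
          | tmul x y =>
            simp only [TensorProduct.map_tmul, LinearMap.lTensor_tmul, LinearMap.comp_apply,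
              LinearEquiv.coe_coe, hΔα]
            induction Δ y with
            | zero => simp
            | add x y hx hy => simp only [map_add, tmul_add, hx, hy]
            | tmul a b => simp [α₂]
        ext h
        simp only [LinearMap.comp_apply, LinearEquiv.coe_coe, hl, hr, hcoassoc]
      rTensor_counit_comp_comul := by
        ext h
        apply (TensorProduct.lid k H).injective
        have e (z : H ⊗[k] H) : TensorProduct.lid k H (LinearMap.rTensor H ε
            (TensorProduct.map α.toLinearMap α.toLinearMap z)) =
            α (TensorProduct.lid k H (TensorProduct.map ε LinearMap.id z)) := by
          induction z with
          | zero => simp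
          | add x y hx hy => simp only [map_add, hx, hy]
          | tmul x y => simp [hεα]
        simp only [LinearMap.comp_apply, e, hcl]
        simp
      lTensor_counit_comp_comul := by
        ext h
        apply (TensorProduct.rid k H).injective
        have e (z : H ⊗[k] H) : TensorProduct.rid k H (LinearMap.lTensor H ε
            (TensorProduct.map α.toLinearMap α.toLinearMap z)) =
            α (TensorProduct.rid k H (TensorProduct.map LinearMap.id ε z)) := by
          induction z with
          | zero => simp
          | add x y hx hy => simp only [map_add, hx, hy]
          | tmul x y => simp [hεα]
        simp only [LinearMap.comp_apply, e, hcr]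
        simp }
  have comul_def (h : H) : Coalgebra.comul (R := k) h =
    TensorProduct.map α.toLinearMap α.toLinearMap (Δ h) := rfl
  have counit_def (h : H) : Coalgebra.counit (R := k) h = ε h := rfl
  let _ : Bialgebra k H := Bialgebra.mk' k H hε1
    (fun {a b} ↦ by
      rw [mul_def, counit_def, ← hεα, LinearEquiv.apply_symm_apply, hεmul]; rfl)
    (by
      rw [one_def, comul_def, hΔ1, TensorProduct.map_tmul, LinearEquiv.coe_coe, hα1]; rfl)
    (fun {a b} ↦ by
      rw [mul_def, comul_def, ← hΔα, LinearEquiv.apply_symm_apply, hΔmul, comul_def, comul_def]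
      induction Δ a with
      | zero => simp
      | add x y hx hy => simp only [map_add, add_tmul, add_mul, hx, hy]
      | tmul a₁ a₂ =>
        induction Δ b with
        | zero => simp
        | add x y hx hy => simp only [map_add, tmul_add, mul_add, hx, hy]
        | tmul b₁ b₂ => simp [mul_def, hsymm_mul])
  let _ : HopfAlgebra k H :=
    { antipode := S
      mul_antipode_rTensor_comul := by
        ext h
        have e (z : H ⊗[k] H) : LinearMap.mul' k H (LinearMap.rTensor H S
            (TensorProduct.map α.toLinearMap α.toLinearMap z)) =
            TensorProduct.lift mul (TensorProduct.map S LinearMap.id z) := by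
          induction z with
          | zero => simp
          | add x y hx hy => simp only [map_add, hx, hy]
          | tmul x y => simp [mul_def, hsymm_mul, hSα]
        simp only [LinearMap.comp_apply, comul_def, counit_def, e, hSl,
          Algebra.linearMap_apply, Algebra.algebraMap_eq_smul_one, one_def]
      mul_antipode_lTensor_comul := by
        ext h
        have e (z : H ⊗[k] H) : LinearMap.mul' k H (LinearMap.lTensor H S
            (TensorProduct.map α.toLinearMap α.toLinearMap z)) =
            TensorProduct.lift mul (TensorProduct.map LinearMap.id S z) := by
          induction z with
          | zero => simp
          | add x y hx hy => simp only [map_add, hx, hy]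
          | tmul x y => simp [mul_def, hsymm_mul, hSα]
        simp only [LinearMap.comp_apply, comul_def, counit_def, e, hSr,
          Algebra.linearMap_apply, Algebra.algebraMap_eq_smul_one, one_def] }
  refine isHomComoduleAlgebra_twist α (fun a b ↦ ?_) hα1
    (fun h ↦ ?_) hεα hSα mul (fun a b ↦ by simp [mul_def]) Δ (fun h ↦ ?_)
  · rw [mul_def, mul_def, LinearEquiv.apply_symm_apply, ← hαmul, LinearEquiv.symm_apply_apply]
  · rw [comul_def, comul_def, hΔα]
  · rw [comul_def, TensorProduct.map_map, LinearEquiv.symm_comp, TensorProduct.map_id,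
      LinearMap.id_apply]

end HomPaper
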